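/- Let A, B, C be von Neumann algebras, let X be an equivalence A-B-bimodule, and let K be a Morita B-C-correspondence. Then the A-C-correspondence X ⊗_B K (the separation-completion of the algebraic balanced tensor product X ⊙_B K with inner product ⟨x ⊗ ξ, y ⊗ η⟩ = ⟨ξ, π_K(⟨x,y⟩_B) η⟩, with A acting by π_⊠(a)(x ⊗ ξ) = ax ⊗ ξ and C acting by ρ_⊠(c)(x ⊗ ξ) = x ⊗ ρ_K(c)ξ) is a Morita A-C-correspondence, i.e. π_⊠ and ρ_⊠ are faithful and π_⊠(A)' = ρ_⊠(C). -/

import Mathlib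

/-!
Common framework for formalizing "Morita theory for dynamical von Neumann algebras".

We work with concrete von Neumann algebras: subsets of `B(H)` for a complex Hilbert
space `H`, which are star-closed and equal to their double commutant.  Since Mathlib
has no σ-weak topology, we use the weak operator topology; recall that on convex sets
(all sets we close are linear subspaces) the WOT closure coincides with the σ-weak
closure, and a linear map between von Neumann algebras is normal iff it is
WOT-continuous on bounded sets.

Since Mathlib has no Hilbert space tensor product, we quantify over a `TensorTheory`:
a package providing, for bundled Hilbert spaces `H, K`, a Hilbert space `T H K`
together with the maps `a ⊗ b` on operators, `ξ ⊗ η` on vectors (with the inner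
product law and density, which pins the structure down uniquely), tensor products of
(normal) maps, slice maps, and the associativity/commutativity/functoriality unitaries.

A locally compact quantum group is encoded via its von Neumann algebra `L^∞(𝔾)`,
the dual algebra `L^∞(𝔾̌)`, the multiplicative unitaries `V, W, V̌` (with the pentagon
equation and the implementation of the coproducts), and the map `x ↦ J̌ x* J̌`
(whose restriction to `L^∞(𝔾)` is the unitary antipode `R`).
-/

noncomputable section

namespace Paper

open Set
open scoped ComplexOrder

notation "⟪" x ", " y "⟫" => (inner ℂ x y : ℂ)

/-- A bundled complex Hilbert space. -/
structure HilbS : Type 1 where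
  carrier : Type
  [nacg : NormedAddCommGroup carrier]
  [ips : InnerProductSpace ℂ carrier]
  [cs : CompleteSpace carrier]

attribute [instance] HilbS.nacg HilbS.ips HilbS.cs

/-- The bounded operators on a Hilbert space. -/
abbrev B (H : HilbS) : Type := H.carrier →L[ℂ] H.carrier

/-- The weak operator topology on `B(H)`. -/
def wotTop (H : HilbS) : TopologicalSpace (B H) :=
  TopologicalSpace.induced
    (fun (T : B H) => fun p : H.carrier × H.carrier => ⟪p.1, T p.2⟫) inferInstance

/-- WOT-closure.  On convex sets this is the σ-weak closure. -/
def wClosure {H : HilbS} (S : Set (B H)) : Set (B H) := @closure _ (wotTop H) S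

/-- σ-weakly closed linear span. -/
def spanClosure {H : HilbS} (S : Set (B H)) : Set (B H) :=
  wClosure ((Submodule.span ℂ S : Submodule ℂ (B H)) : Set (B H))

/-- Normality (σ-weak continuity) of a map on a subset `S ⊆ B(H)`: continuity for the
weak operator topologies on all bounded parts of `S` (for bounded linear maps this is
equivalent to σ-weak continuity). -/
def NormalOn {H K : HilbS} (f : B H → B K) (S : Set (B H)) : Prop :=
  ∀ r : ℝ, @ContinuousOn _ _ (wotTop H) (wotTop K) f (S ∩ Metric.closedBall 0 r)

/-- Normality of a functional. -/
def NormalFunOn {H : HilbS} (f : B H → ℂ) (S : Set (B H)) : Prop :=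
  ∀ r : ℝ, @ContinuousOn _ _ (wotTop H) inferInstance f (S ∩ Metric.closedBall 0 r)

/-- The commutant of a set of operators. -/
def commutant {H : HilbS} (S : Set (B H)) : Set (B H) := Set.centralizer S

/-- A (concrete) von Neumann algebra: a star-closed set of operators equal to its
double commutant. -/
def IsVNA {H : HilbS} (M : Set (B H)) : Prop :=
  (∀ x ∈ M, star x ∈ M) ∧ commutant (commutant M) = M

/-- A self-adjoint projection. -/
def IsSAProj {H : HilbS} (p : B H) : Prop := p * p = p ∧ star p = p

/-- A full projection of `M`: the σ-weakly closed ideal `[M p M]` is all of `M`. -/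
def IsFullProj {H : HilbS} (M : Set (B H)) (p : B H) : Prop :=
  p ∈ M ∧ IsSAProj p ∧ spanClosure {z | ∃ a ∈ M, ∃ b ∈ M, z = a * p * b} = M

/-- A star-algebra homomorphism defined on `M ⊆ B(H)`, with "unit" `e` sent to `e'`. -/
structure IsStarHomOn {H K : HilbS} (M : Set (B H)) (e : B H) (e' : B K)
    (f : B H → B K) : Prop where
  map_add : ∀ x ∈ M, ∀ y ∈ M, f (x + y) = f x + f y
  map_smul : ∀ (c : ℂ), ∀ x ∈ M, f (c • x) = c • f x
  map_mul : ∀ x ∈ M, ∀ y ∈ M, f (x * y) = f x * f y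
  map_star : ∀ x ∈ M, f (star x) = star (f x)
  map_unit : f e = e'

/-- An anti-multiplicative star homomorphism on `M ⊆ B(H)`. -/
structure IsStarAntiHomOn {H K : HilbS} (M : Set (B H)) (e : B H) (e' : B K)
    (f : B H → B K) : Prop where
  map_add : ∀ x ∈ M, ∀ y ∈ M, f (x + y) = f x + f y
  map_smul : ∀ (c : ℂ), ∀ x ∈ M, f (c • x) = c • f x
  map_mul : ∀ x ∈ M, ∀ y ∈ M, f (x * y) = f y * f x
  map_star : ∀ x ∈ M, f (star x) = star (f x)
  map_unit : f e = e'

/-- The corner `pMp`. -/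
def corner {H : HilbS} (M : Set (B H)) (p : B H) : Set (B H) := {x ∈ M | x = p * x * p}

/-- Conjugation of an operator by a unitary (linear isometric equivalence). -/
def conjOp {X Y : Type} [NormedAddCommGroup X] [InnerProductSpace ℂ X]
    [NormedAddCommGroup Y] [InnerProductSpace ℂ Y]
    (u : X ≃ₗᵢ[ℂ] Y) (a : X →L[ℂ] X) : Y →L[ℂ] Y :=
  (u.toLinearIsometry.toContinuousLinearMap.comp a).comp
    u.symm.toLinearIsometry.toContinuousLinearMap

/-- A theory of Hilbert space tensor products: the data of binary tensor products of
Hilbert spaces, elementary tensors of operators and vectors (with the inner product law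
and density of elementary tensors, which determine everything uniquely), tensor
products of maps, slice maps, and the canonical associativity/commutativity/congruence
unitaries. -/
structure TensorTheory : Type 1 where
  T : HilbS → HilbS → HilbS
  tmul : ∀ {H K : HilbS}, B H → B K → B (T H K)
  tvec : ∀ {H K : HilbS}, H.carrier → K.carrier → (T H K).carrier
  tmap : ∀ {H K H' K' : HilbS}, (B H → B H') → (B K → B K') → B (T H K) → B (T H' K')
  sliceL : ∀ {H K : HilbS}, (B H → ℂ) → B (T H K) → B K
  sliceR : ∀ {H K : HilbS}, (B K → ℂ) → B (T H K) → B H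
  assoc : ∀ (H K L : HilbS), ((T (T H K) L).carrier ≃ₗᵢ[ℂ] (T H (T K L)).carrier)
  comm : ∀ (H K : HilbS), ((T H K).carrier ≃ₗᵢ[ℂ] (T K H).carrier)
  congrL : ∀ {H H' : HilbS} (L : HilbS),
    (H.carrier ≃ₗᵢ[ℂ] H'.carrier) → ((T H L).carrier ≃ₗᵢ[ℂ] (T H' L).carrier)
  congrR : ∀ (L : HilbS) {H H' : HilbS},
    (H.carrier ≃ₗᵢ[ℂ] H'.carrier) → ((T L H).carrier ≃ₗᵢ[ℂ] (T L H').carrier)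
  tmul_add_left : ∀ {H K : HilbS} (a b : B H) (c : B K), tmul (a + b) c = tmul a c + tmul b c
  tmul_add_right : ∀ {H K : HilbS} (a : B H) (b c : B K), tmul a (b + c) = tmul a b + tmul a c
  tmul_smul_left : ∀ {H K : HilbS} (z : ℂ) (a : B H) (c : B K), tmul (z • a) c = z • tmul a c
  tmul_smul_right : ∀ {H K : HilbS} (z : ℂ) (a : B H) (c : B K), tmul a (z • c) = z • tmul a c
  tmul_mul : ∀ {H K : HilbS} (a a' : B H) (b b' : B K),
    tmul a b * tmul a' b' = tmul (a * a') (b * b')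
  tmul_star : ∀ {H K : HilbS} (a : B H) (b : B K), star (tmul a b) = tmul (star a) (star b)
  tmul_one : ∀ {H K : HilbS}, tmul (1 : B H) (1 : B K) = 1
  tmul_apply : ∀ {H K : HilbS} (a : B H) (b : B K) (ξ : H.carrier) (η : K.carrier),
    tmul a b (tvec ξ η) = tvec (a ξ) (b η)
  tvec_inner : ∀ {H K : HilbS} (ξ ξ' : H.carrier) (η η' : K.carrier),
    ⟪tvec ξ η, tvec ξ' η'⟫ = ⟪ξ, ξ'⟫ * ⟪η, η'⟫
  tvec_dense : ∀ (H K : HilbS),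
    (Submodule.span ℂ
      (Set.image2 (fun (ξ : H.carrier) (η : K.carrier) => tvec ξ η)
        univ univ)).topologicalClosure = ⊤
  tmap_tmul : ∀ {H K H' K' : HilbS} (f : B H → B H') (g : B K → B K') (a : B H) (b : B K),
    tmap f g (tmul a b) = tmul (f a) (g b)
  sliceL_tmul : ∀ {H K : HilbS} (ω : B H → ℂ) (a : B H) (b : B K),
    sliceL ω (tmul a b) = ω a • b
  sliceR_tmul : ∀ {H K : HilbS} (ω : B K → ℂ) (a : B H) (b : B K),
    sliceR ω (tmul a b) = ω b • a
  assoc_conj : ∀ {H K L : HilbS} (a : B H) (b : B K) (c : B L),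
    conjOp (assoc H K L) (tmul (tmul a b) c) = tmul a (tmul b c)
  comm_conj : ∀ {H K : HilbS} (a : B H) (b : B K),
    conjOp (comm H K) (tmul a b) = tmul b a
  congrL_conj : ∀ {H H' L : HilbS} (u : H.carrier ≃ₗᵢ[ℂ] H'.carrier) (a : B H) (c : B L),
    conjOp (congrL L u) (tmul a c) = tmul (conjOp u a) c
  congrR_conj : ∀ {H H' L : HilbS} (u : H.carrier ≃ₗᵢ[ℂ] H'.carrier) (c : B L) (a : B H),
    conjOp (congrR L u) (tmul c a) = tmul c (conjOp u a)

namespace TensorTheory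

variable (Θ : TensorTheory)

/-- The von Neumann tensor product `M ⊗̄ N` (as a set: the σ-weakly closed span of
elementary tensors; for unitally embedded von Neumann algebras this is `M ⊗̄ N`). -/
def tensorSet {H K : HilbS} (M : Set (B H)) (N : Set (B K)) : Set (B (Θ.T H K)) :=
  spanClosure (Set.image2 (fun (a : B H) (b : B K) => Θ.tmul a b) M N)

/-- leg `12` of an operator on `H1 ⊗ H2` inside `(H1 ⊗ H2) ⊗ H3`. -/
def leg12 {H1 H2 : HilbS} (H3 : HilbS) (x : B (Θ.T H1 H2)) : B (Θ.T (Θ.T H1 H2) H3) :=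
  Θ.tmul x 1

/-- leg `23` of an operator on `H2 ⊗ H3` inside `(H1 ⊗ H2) ⊗ H3`. -/
def leg23 (H1 : HilbS) {H2 H3 : HilbS} (x : B (Θ.T H2 H3)) : B (Θ.T (Θ.T H1 H2) H3) :=
  conjOp (Θ.assoc H1 H2 H3).symm (Θ.tmul (1 : B H1) x)

/-- leg `13` of an operator on `H1 ⊗ H3` inside `(H1 ⊗ H2) ⊗ H3`. -/
def leg13 {H1 : HilbS} (H2 : HilbS) {H3 : HilbS} (x : B (Θ.T H1 H3)) :
    B (Θ.T (Θ.T H1 H2) H3) :=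
  conjOp (Θ.assoc H1 H2 H3).symm
    (conjOp (Θ.congrR H1 (Θ.comm H3 H2))
      (conjOp (Θ.assoc H1 H3 H2) (Θ.tmul x (1 : B H2))))

end TensorTheory

/-- A Morita correspondence between von Neumann algebras `A ⊆ B(Ha)`, `B ⊆ B(Hb)`:
a Hilbert space `K` with a faithful unital normal representation `π` of `A`, a faithful
unital normal anti-representation `ρ` of `B`, such that `π(A)' = ρ(B)`. -/
structure MoritaCorr {Ha Hb : HilbS} (As : Set (B Ha)) (Bs : Set (B Hb))
    (K : HilbS) (π : B Ha → B K) (ρ : B Hb → B K) : Prop where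
  π_hom : IsStarHomOn As 1 1 π
  π_normal : NormalOn π As
  π_inj : InjOn π As
  ρ_hom : IsStarAntiHomOn Bs 1 1 ρ
  ρ_normal : NormalOn ρ Bs
  ρ_inj : InjOn ρ Bs
  comm_eq : commutant (π '' As) = ρ '' Bs

/-- W*-Morita equivalence of von Neumann algebras. -/
def MoritaEquiv {Ha Hb : HilbS} (As : Set (B Ha)) (Bs : Set (B Hb)) : Prop :=
  ∃ (K : HilbS) (π : B Ha → B K) (ρ : B Hb → B K), MoritaCorr As Bs K π ρ

/-- A locally compact quantum group (von Neumann algebraic picture), presented by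
`L^∞(𝔾)` in standard position on `L²(𝔾) = Hg`, the dual algebra `L^∞(𝔾̌)`, the right
regular multiplicative unitary `V ∈ L^∞(𝔾̌) ⊗̄ L^∞(𝔾)` (with the pentagon equation),
the left regular unitary `W`, the right multiplicative unitary `V̌` of the dual, and
the anti-automorphism `adJd : x ↦ J̌ x* J̌` of `B(L²(𝔾))` given by the modular
conjugation `J̌` of `L^∞(𝔾̌)`; its restriction to `L^∞(𝔾)` is the unitary antipode. -/
structure LCQG (Θ : TensorTheory) (Hg : HilbS) where
  Gs : Set (B Hg)
  Gds : Set (B Hg)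
  hGs : IsVNA Gs
  hGds : IsVNA Gds
  V : B (Θ.T Hg Hg)
  W : B (Θ.T Hg Hg)
  Vc : B (Θ.T Hg Hg)
  V_unitary : V ∈ unitary (B (Θ.T Hg Hg))
  W_unitary : W ∈ unitary (B (Θ.T Hg Hg))
  Vc_unitary : Vc ∈ unitary (B (Θ.T Hg Hg))
  V_mem : V ∈ Θ.tensorSet Gds Gs
  W_mem : W ∈ Θ.tensorSet Gs (commutant Gds)
  Vc_mem : Vc ∈ Θ.tensorSet (commutant Gs) Gds
  pentagon : Θ.leg12 Hg V * Θ.leg13 Hg V * Θ.leg23 Hg V = Θ.leg23 Hg V * Θ.leg12 Hg V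
  comult_mem : ∀ x ∈ Gs, V * Θ.tmul x 1 * star V ∈ Θ.tensorSet Gs Gs
  comult_W : ∀ x ∈ Gs, V * Θ.tmul x 1 * star V = star W * Θ.tmul 1 x * W
  dual_comult_mem : ∀ y ∈ Gds, Vc * Θ.tmul y 1 * star Vc ∈ Θ.tensorSet Gds Gds
  dual_comult_eq : ∀ y ∈ Gds, Vc * Θ.tmul y 1 * star Vc = star V * Θ.tmul 1 y * V
  adJd : B Hg → B Hg
  adJd_add : ∀ x y, adJd (x + y) = adJd x + adJd y
  adJd_smul : ∀ (c : ℂ) (x), adJd (c • x) = c • adJd x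
  adJd_mul : ∀ x y, adJd (x * y) = adJd y * adJd x
  adJd_star : ∀ x, adJd (star x) = star (adJd x)
  adJd_invol : ∀ x, adJd (adJd x) = x
  adJd_one : adJd 1 = 1
  adJd_normal : NormalOn adJd univ
  adJd_Gs : adJd '' Gs = Gs
  adJd_Gds : adJd '' Gds = commutant Gds

namespace LCQG

variable {Θ : TensorTheory} {Hg : HilbS}

/-- The comultiplication `Δ(x) = V (x ⊗ 1) V*` (as a map on all of `B(L²𝔾)`, whose
restriction to `L^∞(𝔾)` is the coproduct). -/
def coΔ (Q : LCQG Θ Hg) : B Hg → B (Θ.T Hg Hg) := fun x => Q.V * Θ.tmul x 1 * star Q.V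

/-- The dual comultiplication `Δ̌(y) = V̌ (y ⊗ 1) V̌*`. -/
def coΔd (Q : LCQG Θ Hg) : B Hg → B (Θ.T Hg Hg) := fun y => Q.Vc * Θ.tmul y 1 * star Q.Vc

/-- `L^∞(𝔾̂) = L^∞(𝔾̌)'`. -/
def Ghat (Q : LCQG Θ Hg) : Set (B Hg) := commutant Q.Gds

/-- The unitary antipode `R(x) = J̌ x* J̌`. -/
def R (Q : LCQG Θ Hg) : B Hg → B Hg := Q.adJd

end LCQG

/-- A unitary representation of `𝔾` on `K`: a unitary `U ∈ B(K) ⊗̄ L^∞(𝔾)` with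
`(id ⊗ Δ)(U) = U₁₂ U₁₃`. -/
structure IsGRep {Θ : TensorTheory} {Hg : HilbS} (Q : LCQG Θ Hg) (K : HilbS)
    (U : B (Θ.T K Hg)) : Prop where
  unitary_mem : U ∈ unitary (B (Θ.T K Hg))
  rep : Θ.tmap id Q.coΔ U = conjOp (Θ.assoc K Hg Hg) (Θ.tmul U 1 * Θ.leg13 Hg U)

/-- A (right) coaction of `𝔾` on the von Neumann algebra `A ⊆ B(Ha)` having unit `e`
(use `e = 1` for unitally embedded algebras, `e = p` for corners): an injective normal
unital star-homomorphism `α : A → A ⊗̄ L^∞(𝔾)` with `(α ⊗ id) ∘ α = (id ⊗ Δ) ∘ α`. -/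
structure IsCoactionOn {Θ : TensorTheory} {Hg Ha : HilbS} (Q : LCQG Θ Hg)
    (As : Set (B Ha)) (e : B Ha) (α : B Ha → B (Θ.T Ha Hg)) : Prop where
  hom : IsStarHomOn As e (Θ.tmul e 1) α
  normal : NormalOn α As
  inj : InjOn α As
  mapsTo : MapsTo α As (Θ.tensorSet As Q.Gs)
  coassoc : ∀ a ∈ As, conjOp (Θ.assoc Ha Hg Hg) (Θ.tmap α id (α a)) = Θ.tmap id Q.coΔ (α a)

/-- A `𝔾`-W*-algebra. -/
def IsGWAlg {Θ : TensorTheory} {Hg Ha : HilbS} (Q : LCQG Θ Hg)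
    (As : Set (B Ha)) (α : B Ha → B (Θ.T Ha Hg)) : Prop :=
  IsVNA As ∧ (1 : B Ha) ∈ As ∧ IsCoactionOn Q As 1 α

/-- A `𝔾`-Morita correspondence between `(A, α)` and `(B, β)` (Definition 1.2/3.1 of
the paper): a faithful unital normal representation `π` of `A` and anti-representation
`ρ` of `B` on `K` with `π(A)' = ρ(B)`, and a unitary `𝔾`-representation `U` with
`(π ⊗ id)α(a) = U(π(a) ⊗ 1)U*` and `(ρ ⊗ R)β(b) = U*(ρ(b) ⊗ 1)U`. -/
structure GMoritaCorr {Θ : TensorTheory} {Hg Ha Hb : HilbS} (Q : LCQG Θ Hg)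
    (As : Set (B Ha)) (α : B Ha → B (Θ.T Ha Hg))
    (Bs : Set (B Hb)) (β : B Hb → B (Θ.T Hb Hg))
    (K : HilbS) (π : B Ha → B K) (ρ : B Hb → B K) (U : B (Θ.T K Hg)) : Prop where
  π_hom : IsStarHomOn As 1 1 π
  π_normal : NormalOn π As
  π_inj : InjOn π As
  ρ_hom : IsStarAntiHomOn Bs 1 1 ρ
  ρ_normal : NormalOn ρ Bs
  ρ_inj : InjOn ρ Bs
  comm_eq : commutant (π '' As) = ρ '' Bs
  U_rep : IsGRep Q K U
  π_cov : ∀ a ∈ As, Θ.tmap π id (α a) = U * Θ.tmul (π a) 1 * star U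
  ρ_cov : ∀ b ∈ Bs, Θ.tmap ρ Q.R (β b) = star U * Θ.tmul (ρ b) 1 * U

/-- `𝔾`-W*-Morita equivalence `(A, α) ∼_𝔾 (B, β)`. -/
def GMoritaEquiv {Θ : TensorTheory} {Hg Ha Hb : HilbS} (Q : LCQG Θ Hg)
    (As : Set (B Ha)) (α : B Ha → B (Θ.T Ha Hg))
    (Bs : Set (B Hb)) (β : B Hb → B (Θ.T Hb Hg)) : Prop :=
  ∃ (K : HilbS) (π : B Ha → B K) (ρ : B Hb → B K) (U : B (Θ.T K Hg)),
    GMoritaCorr Q As α Bs β K π ρ U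

/-- A `𝔾`-equivariant isomorphism between (possibly non-unitally embedded)
`𝔾`-W*-algebras. -/
structure IsGEquivIso {Θ : TensorTheory} {Hg H1 H2 : HilbS} (Q : LCQG Θ Hg)
    (Ms : Set (B H1)) (e₁ : B H1) (γ : B H1 → B (Θ.T H1 Hg))
    (Ns : Set (B H2)) (e₂ : B H2) (δ : B H2 → B (Θ.T H2 Hg))
    (φ : B H1 → B H2) : Prop where
  hom : IsStarHomOn Ms e₁ e₂ φ
  normal : NormalOn φ Ms
  inj : InjOn φ Ms
  image : φ '' Ms = Ns
  equivariant : ∀ x ∈ Ms, Θ.tmap φ id (γ x) = δ (φ x)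

/-- The trivial coaction `τ(a) = a ⊗ 1`. -/
def trivCoact (Θ : TensorTheory) (Hg Ha : HilbS) : B Ha → B (Θ.T Ha Hg) :=
  fun a => Θ.tmul a 1

/-- Fixed points of a coaction. -/
def fixedPts (Θ : TensorTheory) {Hg Ha : HilbS} (As : Set (B Ha))
    (α : B Ha → B (Θ.T Ha Hg)) : Set (B Ha) :=
  {x ∈ As | α x = Θ.tmul x 1}

/-- An inner action: implemented by a unitary `𝔾`-representation `U ∈ A ⊗̄ L^∞(𝔾)`. -/
def IsInnerAction {Θ : TensorTheory} {Hg Ha : HilbS} (Q : LCQG Θ Hg)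
    (As : Set (B Ha)) (α : B Ha → B (Θ.T Ha Hg)) : Prop :=
  ∃ U : B (Θ.T Ha Hg), U ∈ Θ.tensorSet As Q.Gs ∧ IsGRep Q Ha U ∧
    ∀ a ∈ As, α a = U * Θ.tmul a 1 * star U

/-- A locally compact quantum group together with its (right) dual, realized on the
same `L²`-space with the standard compatibilities. -/
structure LCQGPair (Θ : TensorTheory) (Hg : HilbS) where
  Q : LCQG Θ Hg
  Qd : LCQG Θ Hg
  dual_alg : Qd.Gs = Q.Gds
  dual_V : Qd.V = Q.Vc
  dual_comm : Qd.Gds = commutant Q.Gs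

/-- The crossed product `A ⋊_α 𝔾 = [α(A)(1 ⊗ L^∞(𝔾̌))]''` (as σ-weakly closed span). -/
def crossedSet {Θ : TensorTheory} {Hg : HilbS} (Q : LCQG Θ Hg) {Ha : HilbS}
    (As : Set (B Ha)) (α : B Ha → B (Θ.T Ha Hg)) : Set (B (Θ.T Ha Hg)) :=
  spanClosure {z | ∃ a ∈ As, ∃ y ∈ Q.Gds, z = α a * Θ.tmul (1 : B Ha) y}

/-- The extension `id ⊗ Δ_r` (equivalently, of `id ⊗ Δ`) to operators on `Ha ⊗ L²(𝔾)`: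
`z ↦ V₂₃ z₁₂ V₂₃*`.  Restricted to `A ⊗̄ L^∞(𝔾)` this is `id ⊗ Δ`, restricted to
`A ⋊_α 𝔾` this is the adjoint `𝔾`-action `id ⊗ Δ_r`. -/
def coactV {Θ : TensorTheory} {Hg : HilbS} (Q : LCQG Θ Hg) {Ha : HilbS} :
    B (Θ.T Ha Hg) → B (Θ.T (Θ.T Ha Hg) Hg) :=
  fun z => Θ.leg23 Ha Q.V * Θ.tmul z 1 * star (Θ.leg23 Ha Q.V)

/-- The dual action `id ⊗ Δ̌_r` on operators on `Ha ⊗ L²(𝔾)`: `z ↦ V̌₂₃ z₁₂ V̌₂₃*`. -/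
def coactVc {Θ : TensorTheory} {Hg : HilbS} (Q : LCQG Θ Hg) {Ha : HilbS} :
    B (Θ.T Ha Hg) → B (Θ.T (Θ.T Ha Hg) Hg) :=
  fun z => Θ.leg23 Ha Q.Vc * Θ.tmul z 1 * star (Θ.leg23 Ha Q.Vc)

/-- A unital completely positive map defined on `M ⊆ B(H)` (with unit `e ↦ e'`). -/
structure IsUCPOn {H K : HilbS} (M : Set (B H)) (e : B H) (e' : B K)
    (f : B H → B K) : Prop where
  map_add : ∀ x ∈ M, ∀ y ∈ M, f (x + y) = f x + f y
  map_smul : ∀ (c : ℂ), ∀ x ∈ M, f (c • x) = c • f x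
  map_unit : f e = e'
  cp : ∀ (n : ℕ) (x : Fin n → B H), (∀ i, x i ∈ M) → ∀ ξ : Fin n → K.carrier,
    0 ≤ ∑ i, ∑ j, ⟪ξ i, (f (star (x i) * x j)) (ξ j)⟫

/-- Injectivity of a von Neumann algebra: a ucp conditional expectation `B(H) → A`. -/
def VNInjective {H : HilbS} (M : Set (B H)) : Prop :=
  ∃ E : B H → B H, IsUCPOn (univ : Set (B H)) 1 1 E ∧ MapsTo E univ M ∧ ∀ x ∈ M, E x = x

/-- `𝔾`-amenability of `(A, α)`: a `𝔾`-equivariant ucp conditional expectation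
`A ⊗̄ L^∞(𝔾) → α(A)`. -/
def GAmenable {Θ : TensorTheory} {Hg Ha : HilbS} (Q : LCQG Θ Hg)
    (As : Set (B Ha)) (α : B Ha → B (Θ.T Ha Hg)) : Prop :=
  ∃ E : B (Θ.T Ha Hg) → B (Θ.T Ha Hg),
    IsUCPOn (Θ.tensorSet As Q.Gs) 1 1 E ∧
    MapsTo E (Θ.tensorSet As Q.Gs) (α '' As) ∧
    (∀ a ∈ As, E (α a) = α a) ∧
    ∀ z ∈ Θ.tensorSet As Q.Gs, Θ.tmap E id (coactV Q z) = coactV Q (E z)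

/-- Inner `𝔾`-amenability of `(A, α)`: a `𝔾`-equivariant ucp conditional expectation
`A ⋊_α 𝔾 → α(A)` for the adjoint action. -/
def InnerGAmenable {Θ : TensorTheory} {Hg Ha : HilbS} (Q : LCQG Θ Hg)
    (As : Set (B Ha)) (α : B Ha → B (Θ.T Ha Hg)) : Prop :=
  ∃ E : B (Θ.T Ha Hg) → B (Θ.T Ha Hg),
    IsUCPOn (crossedSet Q As α) 1 1 E ∧
    MapsTo E (crossedSet Q As α) (α '' As) ∧
    (∀ a ∈ As, E (α a) = α a) ∧
    ∀ z ∈ crossedSet Q As α, Θ.tmap E id (coactV Q z) = coactV Q (E z)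

/-- `𝔾`-injectivity (by the characterization `𝔾`-injective ⟺ injective + `𝔾`-amenable,
[DR24a, Proposition 3.10]). -/
def GInjective {Θ : TensorTheory} {Hg Ha : HilbS} (Q : LCQG Θ Hg)
    (As : Set (B Ha)) (α : B Ha → B (Θ.T Ha Hg)) : Prop :=
  VNInjective As ∧ GAmenable Q As α

/-- Relative amenability of `N ⊆ M` (both `𝔾`-invariant subalgebras of `B(L²𝔾)` for a
coproduct-type action): a `𝔾`-equivariant ucp map `M → N`. -/
def RelativelyAmenable {Θ : TensorTheory} {Hg : HilbS} (Q : LCQG Θ Hg)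
    (Ms Ns : Set (B Hg)) : Prop :=
  ∃ E : B Hg → B Hg, IsUCPOn Ms 1 1 E ∧ MapsTo E Ms Ns ∧
    ∀ y ∈ Ms, Θ.tmap E id (Q.coΔ y) = Q.coΔ (E y)

/-- A standard form of a `𝔾`-W*-algebra `(M, μ)`, with the unitary implementation of
the action: a faithful unital normal representation `π` on `L`, the conjugation map
`adJ : x ↦ J x* J` with `J π(M) J = π(M)'` and `J c J = c*` for central `c`, and
a unitary `𝔾`-representation `U` implementing `μ`. -/
structure StdFormG {Θ : TensorTheory} {Hg Ha : HilbS} (Q : LCQG Θ Hg)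
    (Ms : Set (B Ha)) (μ : B Ha → B (Θ.T Ha Hg)) where
  L : HilbS
  π : B Ha → B L
  hom : IsStarHomOn Ms 1 1 π
  normal : NormalOn π Ms
  inj : InjOn π Ms
  adJ : B L → B L
  adJ_add : ∀ x y, adJ (x + y) = adJ x + adJ y
  adJ_smul : ∀ (c : ℂ) (x), adJ (c • x) = c • adJ x
  adJ_mul : ∀ x y, adJ (x * y) = adJ y * adJ x
  adJ_star : ∀ x, adJ (star x) = star (adJ x)
  adJ_invol : ∀ x, adJ (adJ x) = x
  adJ_one : adJ 1 = 1
  adJ_normal : NormalOn adJ univ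
  adJ_image : adJ '' (π '' Ms) = commutant (π '' Ms)
  adJ_central : ∀ x ∈ (π '' Ms) ∩ commutant (π '' Ms), adJ x = star x
  U : B (Θ.T L Hg)
  U_rep : IsGRep Q L U
  impl : ∀ a ∈ Ms, Θ.tmap π id (μ a) = U * Θ.tmul (π a) 1 * star U

/-- Matrix coefficients of a (raw) `𝔾`-`A`-`A`-correspondence `(K, π, ρ, U)`. -/
def corrCoeff (Θ : TensorTheory) {Hg Ha : HilbS} {K : HilbS}
    (π ρ : B Ha → B K) (U : B (Θ.T K Hg)) (ξ ξ' : K.carrier)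
    (a b : B Ha) (η η' : Hg.carrier) : ℂ :=
  ⟪Θ.tvec ξ η, ((Θ.tmul (π a) 1 * U * Θ.tmul (ρ b) 1 : B (Θ.T K Hg))) (Θ.tvec ξ' η')⟫

/-- `𝔾`-equivariant weak containment of `𝔾`-`A`-`A`-correspondences, formulated by
approximation of all (equivariant) matrix coefficients. -/
def wkContained (Θ : TensorTheory) {Hg Ha : HilbS} (As : Set (B Ha))
    (K₁ : HilbS) (π₁ ρ₁ : B Ha → B K₁) (U₁ : B (Θ.T K₁ Hg))
    (K₂ : HilbS) (π₂ ρ₂ : B Ha → B K₂) (U₂ : B (Θ.T K₂ Hg)) : Prop :=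
  ∀ (ξ : K₁.carrier) (F : Finset (B Ha × B Ha × Hg.carrier × Hg.carrier)) (ε : ℝ),
    0 < ε → (∀ q ∈ F, q.1 ∈ As ∧ q.2.1 ∈ As) →
    ∃ (n : ℕ) (η : Fin n → K₂.carrier), ∀ q ∈ F,
      ‖corrCoeff Θ π₁ ρ₁ U₁ ξ ξ q.1 q.2.1 q.2.2.1 q.2.2.2 -
        ∑ i, corrCoeff Θ π₂ ρ₂ U₂ (η i) (η i) q.1 q.2.1 q.2.2.1 q.2.2.2‖ < ε

/-- Strong `𝔾`-amenability of `(A, α)`: the trivial `𝔾`-`A`-`A`-correspondence `L²(A)`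
is `𝔾`-weakly contained in `L²(A ⊗̄ L^∞(𝔾))` (for any realizations of the standard
forms with their unitary implementations). -/
def StronglyGAmenable {Θ : TensorTheory} {Hg Ha : HilbS} (Q : LCQG Θ Hg)
    (As : Set (B Ha)) (α : B Ha → B (Θ.T Ha Hg)) : Prop :=
  ∀ (sfA : StdFormG Q As α) (sfT : StdFormG Q (Θ.tensorSet As Q.Gs) (coactV Q)),
    wkContained Θ As sfA.L sfA.π (fun a => sfA.adJ (sfA.π a)) sfA.U
      sfT.L (fun a => sfT.π (α a)) (fun a => sfT.adJ (sfT.π (α a))) sfT.U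

/-- Strong inner `𝔾`-amenability of `(A, α)`: the trivial `𝔾`-`A`-`A`-correspondence is
`𝔾`-weakly contained in `L²(A ⋊_α 𝔾)` with the adjoint action. -/
def StronglyInnerGAmenable {Θ : TensorTheory} {Hg Ha : HilbS} (Q : LCQG Θ Hg)
    (As : Set (B Ha)) (α : B Ha → B (Θ.T Ha Hg)) : Prop :=
  ∀ (sfA : StdFormG Q As α) (sfT : StdFormG Q (crossedSet Q As α) (coactV Q)),
    wkContained Θ As sfA.L sfA.π (fun a => sfA.adJ (sfA.π a)) sfA.U
      sfT.L (fun a => sfT.π (α a)) (fun a => sfT.adJ (sfT.π (α a))) sfT.U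

/-- A Vaes-closed quantum subgroup `ℍ` of `𝔾`, given by a faithful unital normal
*-homomorphism `γ̌ : L^∞(ℍ̌) → L^∞(𝔾̌)` intertwining the dual coproducts. -/
structure ClosedQSubgroup (Θ : TensorTheory) {Hg Hh : HilbS}
    (G : LCQG Θ Hg) (Hq : LCQG Θ Hh) where
  γd : B Hh → B Hg
  hom : IsStarHomOn Hq.Gds 1 1 γd
  normal : NormalOn γd Hq.Gds
  inj : InjOn γd Hq.Gds
  mapsTo : MapsTo γd Hq.Gds G.Gds
  intertwine : ∀ y ∈ Hq.Gds, Θ.tmap γd γd (Hq.coΔd y) = G.coΔd (γd y)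

namespace ClosedQSubgroup

variable {Θ : TensorTheory} {Hg Hh : HilbS} {G : LCQG Θ Hg} {Hq : LCQG Θ Hh}

/-- `V_{𝔾,ℍ} = (γ̌ ⊗ id)(V_ℍ)`. -/
def VGH (c : ClosedQSubgroup Θ G Hq) : B (Θ.T Hg Hh) := Θ.tmap c.γd id Hq.V

/-- The coaction `Δ^{𝔾,ℍ} : L^∞(𝔾) → L^∞(𝔾) ⊗̄ L^∞(ℍ)`. -/
def ΔGH (c : ClosedQSubgroup Θ G Hq) : B Hg → B (Θ.T Hg Hh) :=
  fun x => c.VGH * Θ.tmul x 1 * star c.VGH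

/-- `γ̂ = Ad(J̌_𝔾) ∘ γ̌ ∘ Ad(J̌_ℍ) : L^∞(ℍ̂) → L^∞(𝔾̂)`. -/
def γhat (c : ClosedQSubgroup Θ G Hq) : B Hh → B Hg :=
  fun y => G.adJd (c.γd (Hq.adJd y))

/-- `W_{ℍ,𝔾} = (id ⊗ γ̂)(W_ℍ)`. -/
def WHG (c : ClosedQSubgroup Θ G Hq) : B (Θ.T Hh Hg) := Θ.tmap id c.γhat Hq.W

/-- The coaction `Δ^{ℍ,𝔾} : L^∞(𝔾) → L^∞(ℍ) ⊗̄ L^∞(𝔾)`. -/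
def ΔHG (c : ClosedQSubgroup Θ G Hq) : B Hg → B (Θ.T Hh Hg) :=
  fun x => star c.WHG * Θ.tmul 1 x * c.WHG

/-- The cotensor product (induction) `A □_ℍ L^∞(𝔾)`. -/
def cotensor (c : ClosedQSubgroup Θ G Hq) {Ha : HilbS} (As : Set (B Ha))
    (αH : B Ha → B (Θ.T Ha Hh)) : Set (B (Θ.T Ha Hg)) :=
  {z ∈ Θ.tensorSet As G.Gs |
    Θ.tmap αH id z = conjOp (Θ.assoc Ha Hh Hg).symm (Θ.tmap id c.ΔHG z)}

/-- The canonical dual `𝔾̌`-action `δ = (id ⊗ id ⊗ γ̌) ∘ (id ⊗ Δ̌_r^ℍ)` on `A ⋊_α ℍ`. -/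
def dualCrossedAct (c : ClosedQSubgroup Θ G Hq) {Ha : HilbS} :
    B (Θ.T Ha Hh) → B (Θ.T (Θ.T Ha Hh) Hg) :=
  fun z => Θ.tmap id c.γd (coactVc Hq z)

end ClosedQSubgroup

/-- The dual coideal `L^∞(𝕂̌) = J̌ (L^∞(𝕂\𝔾)' ∩ L^∞(𝔾̂)) J̌ ⊆ L^∞(𝔾̌)`. -/
def dualCoideal {Θ : TensorTheory} {Hg : HilbS} (Q : LCQG Θ Hg)
    (Kset : Set (B Hg)) : Set (B Hg) :=
  Q.adJd '' (commutant Kset ∩ Q.Ghat)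

/-- The vector functional `ω_{ξ,η} = ⟪ξ, · η⟫`. -/
def vecFun {H : HilbS} (ξ η : H.carrier) : B H → ℂ := fun T => ⟪ξ, T η⟫

/-- The C*-algebra of regular elements of a `𝔾`-W*-algebra (`𝔾` compact): the norm
closed span of the elements `(id ⊗ ω)α(a)`, `ω` normal. -/
def regulars (Θ : TensorTheory) {Hg Ha : HilbS} (As : Set (B Ha))
    (α : B Ha → B (Θ.T Ha Hg)) : Set (B Ha) :=
  closure ((Submodule.span ℂ
    {z | ∃ a ∈ As, ∃ ξ η : Hg.carrier, z = Θ.sliceR (vecFun ξ η) (α a)} :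
      Submodule ℂ (B Ha)) : Set (B Ha))

/-- Compactness of `𝔾`: a (normal, faithful, bi-invariant) Haar state. -/
structure IsCompactData {Θ : TensorTheory} {Hg : HilbS} (Q : LCQG Θ Hg) where
  haar : B Hg → ℂ
  haar_add : ∀ x y, haar (x + y) = haar x + haar y
  haar_smul : ∀ (c : ℂ) (x), haar (c • x) = c * haar x
  haar_pos : ∀ x ∈ Q.Gs, 0 ≤ haar (star x * x)
  haar_one : haar 1 = 1
  haar_normal : NormalFunOn haar Q.Gs
  haar_faithful : ∀ x ∈ Q.Gs, haar (star x * x) = 0 → x = 0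
  left_inv : ∀ x ∈ Q.Gs, Θ.sliceL haar (Q.coΔ x) = haar x • 1
  right_inv : ∀ x ∈ Q.Gs, Θ.sliceR haar (Q.coΔ x) = haar x • 1

/-- `𝕂` is a compact quasi-subgroup of `𝔾`: the coideal `L^∞(𝕂\𝔾)` arises as the fixed
points of the conditional expectation `(id ⊗ ω)Δ` of an idempotent state `ω`. -/
def IsCompactQuasiSubgroup (Θ : TensorTheory) {Hg : HilbS} (Q : LCQG Θ Hg)
    (Kset : Set (B Hg)) : Prop :=
  ∃ ω : B Hg → ℂ,
    (∀ x y, ω (x + y) = ω x + ω y) ∧ (∀ (c : ℂ) (x), ω (c • x) = c * ω x) ∧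
    (∀ x ∈ Q.Gs, 0 ≤ ω (star x * x)) ∧ ω 1 = 1 ∧
    (∀ x ∈ Q.Gs, ω (Θ.sliceR ω (Q.coΔ x)) = ω x) ∧
    Kset = {x ∈ Q.Gs | Θ.sliceR ω (Q.coΔ x) = x}

end Paper

namespace Paper

open Set
open scoped ComplexOrder

/-- An equivalence `A`-`B`-bimodule `X` (Rieffel): a complex vector space which is
simultaneously a left Hilbert W*-`A`-module and a right Hilbert W*-`B`-module, with
`⟨x,y⟩_A z = x ⟨y,z⟩_B` and σ-weakly dense spans of inner products. -/
structure EquivBimodule {Ha Hb : HilbS} (As : Set (B Ha)) (Bs : Set (B Hb)) where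
  X : Type
  [addX : AddCommGroup X]
  [modX : Module ℂ X]
  actL : B Ha → X → X
  actR : X → B Hb → X
  ipA : X → X → B Ha
  ipB : X → X → B Hb
  actL_one : ∀ x, actL 1 x = x
  actL_mul : ∀ a ∈ As, ∀ a' ∈ As, ∀ x, actL (a * a') x = actL a (actL a' x)
  actL_add : ∀ a ∈ As, ∀ x y, actL a (x + y) = actL a x + actL a y
  actL_add' : ∀ a ∈ As, ∀ a' ∈ As, ∀ x, actL (a + a') x = actL a x + actL a' x
  actL_smul : ∀ (c : ℂ), ∀ a ∈ As, ∀ x, actL (c • a) x = c • actL a x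
  actL_smul' : ∀ (c : ℂ), ∀ a ∈ As, ∀ x, actL a (c • x) = c • actL a x
  actR_one : ∀ x, actR x 1 = x
  actR_mul : ∀ b ∈ Bs, ∀ b' ∈ Bs, ∀ x, actR x (b * b') = actR (actR x b) b'
  actR_add : ∀ b ∈ Bs, ∀ x y, actR (x + y) b = actR x b + actR y b
  actR_add' : ∀ b ∈ Bs, ∀ b' ∈ Bs, ∀ x, actR x (b + b') = actR x b + actR x b'
  actR_smul : ∀ (c : ℂ), ∀ b ∈ Bs, ∀ x, actR x (c • b) = c • actR x b
  actR_smul' : ∀ (c : ℂ), ∀ b ∈ Bs, ∀ x, actR (c • x) b = c • actR x b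
  bimod : ∀ a ∈ As, ∀ b ∈ Bs, ∀ x, actR (actL a x) b = actL a (actR x b)
  ipA_mem : ∀ x y, ipA x y ∈ As
  ipB_mem : ∀ x y, ipB x y ∈ Bs
  ipB_add_right : ∀ x y z, ipB x (y + z) = ipB x y + ipB x z
  ipB_smul_right : ∀ (c : ℂ) (x y), ipB x (c • y) = c • ipB x y
  ipB_star : ∀ x y, star (ipB x y) = ipB y x
  ipB_actR : ∀ x y, ∀ b ∈ Bs, ipB x (actR y b) = ipB x y * b
  ipB_actL : ∀ a ∈ As, ∀ x y, ipB (actL a x) y = ipB x (actL (star a) y)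
  ipB_pos : ∀ x, (ipB x x).IsPositive
  ipB_defin : ∀ x, ipB x x = 0 → x = 0
  ipA_add_left : ∀ x y z, ipA (x + y) z = ipA x z + ipA y z
  ipA_smul_left : ∀ (c : ℂ) (x y), ipA (c • x) y = c • ipA x y
  ipA_star : ∀ x y, star (ipA x y) = ipA y x
  ipA_actL : ∀ a ∈ As, ∀ x y, ipA (actL a x) y = a * ipA x y
  ipA_actR : ∀ b ∈ Bs, ∀ x y, ipA (actR x b) y = ipA x (actR y (star b))
  ipA_pos : ∀ x, (ipA x x).IsPositive
  compat : ∀ x y z, actL (ipA x y) z = actR x (ipB y z)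
  denseA : spanClosure {z : B Ha | ∃ x y, z = ipA x y} = As
  denseB : spanClosure {z : B Hb | ∃ x y, z = ipB x y} = Bs
  normalL : ∀ x y, NormalOn (fun a => ipB x (actL a y)) As
  normalR : ∀ x y, NormalOn (fun b => ipA (actR x b) y) Bs

attribute [instance] EquivBimodule.addX EquivBimodule.modX

open Filter Topology

theorem vna_norm_closed {H : HilbS} {M : Set (B H)} (hM : IsVNA M) : IsClosed M := by
  rw [← hM.2]
  exact Set.isClosed_centralizer _

/-- The star subalgebra underlying a von Neumann algebra. -/
def vnaSub {H : HilbS} {M : Set (B H)} (hM : IsVNA M) : StarSubalgebra ℂ (B H) where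
  carrier := M
  mul_mem' {a b} ha hb := by
    rw [← hM.2] at ha hb ⊢
    exact Set.mul_mem_centralizer ha hb
  add_mem' {a b} ha hb := by
    rw [← hM.2] at ha hb ⊢
    exact Set.add_mem_centralizer ha hb
  algebraMap_mem' r := by
    rw [← hM.2]
    exact (Subalgebra.centralizer ℂ (commutant M)).algebraMap_mem r
  star_mem' {a} ha := hM.1 a ha

instance {H : HilbS} {M : Set (B H)} (hM : IsVNA M) : IsClosed (vnaSub hM : Set (B H)) :=
  vna_norm_closed hM

theorem mem_vnaSub {H : HilbS} {M : Set (B H)} (hM : IsVNA M) (a : B H) :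
    a ∈ vnaSub hM ↔ a ∈ M := Iff.rfl

theorem vna_smul {H : HilbS} {M : Set (B H)} (hM : IsVNA M) (c : ℂ) {a : B H} (ha : a ∈ M) :
    c • a ∈ M := (vnaSub hM).smul_mem (x := a) ha c

/-- A star homomorphism on a von Neumann algebra, bundled. -/
def homOf {H K : HilbS} {M : Set (B H)} (hM : IsVNA M) {f : B H → B K}
    (hf : IsStarHomOn M 1 1 f) : (vnaSub hM) →⋆ₙₐ[ℂ] B K where
  toFun a := f a.1
  map_smul' c a := hf.map_smul c a.1 a.2
  map_zero' := by
    have := hf.map_smul 0 0 (vnaSub hM).zero_mem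
    simpa using this
  map_add' a b := hf.map_add a.1 a.2 b.1 b.2
  map_mul' a b := hf.map_mul a.1 a.2 b.1 b.2
  map_star' a := hf.map_star a.1 a.2

/-- A star antihomomorphism on a von Neumann algebra, bundled. -/
def antiHomOf {H K : HilbS} {M : Set (B H)} (hM : IsVNA M) {f : B H → B K}
    (hf : IsStarAntiHomOn M 1 1 f) : (vnaSub hM) →⋆ₙₐ[ℂ] (B K)ᵐᵒᵖ where
  toFun a := MulOpposite.op (f a.1)
  map_smul' c a := congrArg MulOpposite.op (hf.map_smul c a.1 a.2)
  map_zero' := by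
    have := hf.map_smul 0 0 (vnaSub hM).zero_mem
    simpa using this
  map_add' a b := congrArg MulOpposite.op (hf.map_add a.1 a.2 b.1 b.2)
  map_mul' a b := congrArg MulOpposite.op (hf.map_mul a.1 a.2 b.1 b.2)
  map_star' a := congrArg MulOpposite.op (hf.map_star a.1 a.2)

theorem hom_norm_le {H K : HilbS} {M : Set (B H)} (hM : IsVNA M) {f : B H → B K}
    (hf : IsStarHomOn M 1 1 f) {a : B H} (ha : a ∈ M) : ‖f a‖ ≤ ‖a‖ :=
  NonUnitalStarAlgHom.norm_apply_le (A := vnaSub hM) (B := B K) (homOf hM hf)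
    (⟨a, ha⟩ : vnaSub hM)

theorem hom_norm_eq {H K : HilbS} {M : Set (B H)} (hM : IsVNA M) {f : B H → B K}
    (hf : IsStarHomOn M 1 1 f) (hi : InjOn f M) {a : B H} (ha : a ∈ M) : ‖f a‖ = ‖a‖ :=
  NonUnitalStarAlgHom.norm_map (A := vnaSub hM) (B := B K) (homOf hM hf)
    (fun x y h => Subtype.ext (hi x.2 y.2 h)) (⟨a, ha⟩ : vnaSub hM)

theorem antiHom_norm_le {H K : HilbS} {M : Set (B H)} (hM : IsVNA M) {f : B H → B K}
    (hf : IsStarAntiHomOn M 1 1 f) {a : B H} (ha : a ∈ M) : ‖f a‖ ≤ ‖a‖ :=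
  NonUnitalStarAlgHom.norm_apply_le (A := vnaSub hM) (B := (B K)ᵐᵒᵖ) (antiHomOf hM hf)
    (⟨a, ha⟩ : vnaSub hM)

/-- Two operators agreeing on a total set agree. -/
theorem ext_total {E F : Type*} [NormedAddCommGroup E] [NormedSpace ℂ E]
    [NormedAddCommGroup F] [NormedSpace ℂ F] {S : Set E}
    (hS : (Submodule.span ℂ S).topologicalClosure = ⊤) {T T' : E →L[ℂ] F}
    (h : ∀ v ∈ S, T v = T' v) : T = T' :=
  ContinuousLinearMap.ext_on (Submodule.dense_iff_topologicalClosure_eq_top.2 hS) h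

theorem eq_zero_total {E : Type*} [NormedAddCommGroup E] [InnerProductSpace ℂ E] {S : Set E}
    (hS : (Submodule.span ℂ S).topologicalClosure = ⊤) {v : E}
    (h : ∀ w ∈ S, ⟪w, v⟫ = 0) : v = 0 := by
  have h1 : (innerSL ℂ v : E →L[ℂ] ℂ) = 0 := ext_total hS fun w hw => by
    simpa using inner_eq_zero_symm.1 (h w hw)
  have h2 : (innerSL ℂ v) v = 0 := by rw [h1]; rfl
  simpa using h2

theorem total_of_perp {E : Type*} [NormedAddCommGroup E] [InnerProductSpace ℂ E]
    [CompleteSpace E] {S : Set E}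
    (h : ∀ v : E, (∀ w ∈ S, ⟪w, v⟫ = 0) → v = 0) :
    (Submodule.span ℂ S).topologicalClosure = ⊤ := by
  rw [Submodule.topologicalClosure_eq_top_iff, Submodule.eq_bot_iff]
  intro v hv
  exact h v fun w hw => (Submodule.mem_orthogonal _ _).1 hv w (Submodule.subset_span hw)

/-- Extending an inner product preserving assignment. -/
theorem exists_extend {ι E F : Type*} [NormedAddCommGroup E] [InnerProductSpace ℂ E]
    [NormedAddCommGroup F] [InnerProductSpace ℂ F] [CompleteSpace F] (v : ι → E) (w : ι → F)
    (hv : (Submodule.span ℂ (range v)).topologicalClosure = ⊤)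
    (h : ∀ i k, ⟪v i, v k⟫ = ⟪w i, w k⟫) : ∃ S : E →L[ℂ] F, ∀ i, S (v i) = w i := by
  have hd : DenseRange (Finsupp.linearCombination ℂ v) := by
    have := Submodule.dense_iff_topologicalClosure_eq_top.2 hv
    rw [← Finsupp.range_linearCombination] at this
    exact this
  have hn : ∀ c, ‖Finsupp.linearCombination ℂ w c‖ ≤ 1 * ‖Finsupp.linearCombination ℂ v c‖ := by
    intro c
    have : ⟪Finsupp.linearCombination ℂ w c, Finsupp.linearCombination ℂ w c⟫
        = ⟪Finsupp.linearCombination ℂ v c, Finsupp.linearCombination ℂ v c⟫ := by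
      simp only [Finsupp.linearCombination_apply, Finsupp.sum_inner, Finsupp.inner_sum,
        inner_smul_left, inner_smul_right, h]
    rw [inner_self_eq_norm_sq_to_K, inner_self_eq_norm_sq_to_K] at this
    have h2 : ‖Finsupp.linearCombination ℂ w c‖ ^ 2 = ‖Finsupp.linearCombination ℂ v c‖ ^ 2 := by
      exact_mod_cast this
    rw [one_mul]
    exact ((pow_left_inj₀ (norm_nonneg _) (norm_nonneg _) two_ne_zero).1 h2).le
  refine ⟨(Finsupp.linearCombination ℂ w).extendOfNorm (Finsupp.linearCombination ℂ v), fun i => ?_⟩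
  have := LinearMap.extendOfNorm_eq (f := Finsupp.linearCombination ℂ w) hd ⟨1, hn⟩ (Finsupp.single i 1)
  simpa using this


theorem wot_tendsto {α : Type*} {H : HilbS} {l : Filter α} {f : α → B H} {T : B H} :
    Tendsto f l (@nhds _ (wotTop H) T) ↔
      ∀ ξ η : H.carrier, Tendsto (fun x => ⟪ξ, f x η⟫) l (𝓝 ⟪ξ, T η⟫) := by
  unfold wotTop
  rw [nhds_induced, tendsto_comap_iff, tendsto_pi_nhds]
  exact ⟨fun h ξ η => h (ξ, η), fun h p => h p.1 p.2⟩

theorem wot_continuous {H : HilbS} (ξ η : H.carrier) :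
    @Continuous _ _ (wotTop H) _ (fun T : B H => ⟪ξ, T η⟫) := by
  rw [@continuous_iff_continuousAt _ _ (wotTop H)]
  intro T
  exact (wot_tendsto (f := fun T => T)).1 tendsto_id ξ η

theorem spanClosure_zero {H : HilbS} {S : Set (B H)} (ξ η : H.carrier)
    (h : ∀ z ∈ S, ⟪ξ, z η⟫ = 0) {z : B H} (hz : z ∈ spanClosure S) : ⟪ξ, z η⟫ = 0 := by
  have hc : @IsClosed _ (wotTop H) {z : B H | ⟪ξ, z η⟫ = 0} :=
    @IsClosed.preimage _ _ (wotTop H) _ _ (wot_continuous ξ η) _ isClosed_singleton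
  refine (@closure_minimal _ (wotTop H) _ _ ?_ hc) hz
  intro y hy
  refine Submodule.span_induction (p := fun y _ => ⟪ξ, y η⟫ = 0) h (by simp) ?_ ?_ hy
  · intro x y _ _ hx hy
    simp [hx, hy]
  · intro c x _ hx
    simp [hx]

/-- Pointwise convergence of uniformly bounded operators on a total set. -/
theorem tendsto_total {α E F : Type*} [NormedAddCommGroup E] [NormedSpace ℂ E]
    [NormedAddCommGroup F] [NormedSpace ℂ F] {S : Set E}
    (hS : (Submodule.span ℂ S).topologicalClosure = ⊤) {l : Filter α} {T : α → E →L[ℂ] F}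
    {T₀ : E →L[ℂ] F} {C : ℝ} (hb : ∀ᶠ a in l, ‖T a‖ ≤ C)
    (h : ∀ v ∈ S, Tendsto (fun a => T a v) l (𝓝 (T₀ v))) (v : E) :
    Tendsto (fun a => T a v) l (𝓝 (T₀ v)) := by
  have hspan : ∀ v ∈ Submodule.span ℂ S, Tendsto (fun a => T a v) l (𝓝 (T₀ v)) := by
    intro v hv
    refine Submodule.span_induction (p := fun v _ => Tendsto (fun a => T a v) l (𝓝 (T₀ v)))
      h (by simpa using tendsto_const_nhds) ?_ ?_ hv
    · intro x y _ _ hx hy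
      simpa using hx.add hy
    · intro c x _ hx
      simpa using hx.const_smul c
  have hd : v ∈ closure (Submodule.span ℂ S : Set E) :=
    (Submodule.dense_iff_topologicalClosure_eq_top.2 hS) v
  rw [Metric.tendsto_nhds]
  intro ε hε
  set D : ℝ := |C| + ‖T₀‖ + 1 with hD
  have hDpos : 0 < D := by positivity
  obtain ⟨u, hu, huv⟩ := Metric.mem_closure_iff.1 hd (ε / (2 * D)) (by positivity)
  filter_upwards [hb, Metric.tendsto_nhds.1 (hspan u hu) (ε / 2) (by positivity)] with a ha hau
  rw [dist_eq_norm] at huv hau ⊢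
  have e1 : T a v - T₀ v = (T a (v - u) - T₀ (v - u)) + (T a u - T₀ u) := by
    simp only [map_sub]; abel
  have e2 : ‖T a (v - u)‖ ≤ |C| * ‖v - u‖ :=
    ((T a).le_opNorm _).trans (by gcongr; exact ha.trans (le_abs_self C))
  have e3 : ‖T₀ (v - u)‖ ≤ ‖T₀‖ * ‖v - u‖ := T₀.le_opNorm _
  have e4 : (|C| + ‖T₀‖) * ‖v - u‖ ≤ ε / 2 := by
    calc (|C| + ‖T₀‖) * ‖v - u‖ ≤ D * (ε / (2 * D)) := by
          gcongr
          linarith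
      _ = ε / 2 := by field_simp
  calc ‖T a v - T₀ v‖ ≤ ‖T a (v - u) - T₀ (v - u)‖ + ‖T a u - T₀ u‖ := by
        rw [e1]; exact norm_add_le _ _
    _ ≤ ‖T a (v - u)‖ + ‖T₀ (v - u)‖ + ‖T a u - T₀ u‖ := by gcongr; exact norm_sub_le _ _
    _ < ε := by linarith

theorem wot_tendsto_total {α E : Type*} [NormedAddCommGroup E] [InnerProductSpace ℂ E] {S : Set E}
    (hS : (Submodule.span ℂ S).topologicalClosure = ⊤) {l : Filter α} {T : α → E →L[ℂ] E}
    {T₀ : E →L[ℂ] E} {C : ℝ} (hb : ∀ᶠ a in l, ‖T a‖ ≤ C)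
    (h : ∀ v ∈ S, ∀ w ∈ S, Tendsto (fun a => ⟪v, T a w⟫) l (𝓝 ⟪v, T₀ w⟫)) (v w : E) :
    Tendsto (fun a => ⟪v, T a w⟫) l (𝓝 ⟪v, T₀ w⟫) := by
  have step1 : ∀ v ∈ S, ∀ w, Tendsto (fun a => ⟪v, T a w⟫) l (𝓝 ⟪v, T₀ w⟫) := by
    intro v hv w
    refine tendsto_total (T := fun a => (innerSL ℂ v).comp (T a)) (T₀ := (innerSL ℂ v).comp T₀)
      (C := ‖v‖ * C) hS ?_ (fun w hw => h v hv w hw) w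
    filter_upwards [hb] with a ha
    calc _ ≤ ‖innerSL ℂ v‖ * ‖T a‖ := ContinuousLinearMap.opNorm_comp_le _ _
      _ ≤ ‖v‖ * C := by rw [innerSL_apply_norm]; gcongr
  have step2 : Tendsto (fun a => ⟪T a w, v⟫) l (𝓝 ⟪T₀ w, v⟫) := by
    refine tendsto_total (T := fun a => innerSL ℂ (T a w)) (T₀ := innerSL ℂ (T₀ w))
      (C := C * ‖w‖) hS ?_ (fun v hv => ?_) v
    · filter_upwards [hb] with a ha
      rw [innerSL_apply_norm]
      exact ((T a).le_opNorm w).trans (by gcongr)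
    · have := (Complex.continuous_conj.tendsto _).comp (step1 v hv w)
      simpa [Function.comp_def, inner_conj_symm] using this
  have := (Complex.continuous_conj.tendsto _).comp step2
  simpa [Function.comp_def, inner_conj_symm] using this

theorem normalOn_of_total {H K : HilbS} {f : B H → B K} {M : Set (B H)} {S : Set K.carrier}
    (hS : (Submodule.span ℂ S).topologicalClosure = ⊤) (hb : ∀ a ∈ M, ‖f a‖ ≤ ‖a‖)
    (h : ∀ r : ℝ, ∀ v ∈ S, ∀ w ∈ S, @ContinuousOn _ _ (wotTop H) _ (fun a => ⟪v, f a w⟫)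
      (M ∩ Metric.closedBall 0 r)) : NormalOn f M := by
  intro r a ha
  refine wot_tendsto.2 fun ξ η => ?_
  refine wot_tendsto_total (C := r) hS ?_ (fun v hv w hw => h r v hv w hw a ha) ξ η
  filter_upwards [@self_mem_nhdsWithin _ (wotTop H) a (M ∩ Metric.closedBall 0 r)] with b hb'
  exact (hb b hb'.1).trans (by simpa using hb'.2)

theorem normalOn_apply {H K : HilbS} {f : B H → B K} {M : Set (B H)} (hf : NormalOn f M) (r : ℝ)
    (ξ η : K.carrier) : @ContinuousOn _ _ (wotTop H) _ (fun a => ⟪ξ, f a η⟫)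
      (M ∩ Metric.closedBall 0 r) :=
  fun a ha => wot_tendsto.1 (hf r a ha) ξ η

/-- Nondegeneracy: vectors killed by the inner products vanish. -/
theorem nondeg {H K : HilbS} {M : Set (B H)} (hM : IsVNA M) (h1 : (1 : B H) ∈ M)
    {π : B H → B K} (hπ : IsStarHomOn M 1 1 π) (hn : NormalOn π M) {S : Set (B H)}
    (hSM : S ⊆ M) (hstar : ∀ s ∈ S, star s ∈ S) (hd : spanClosure S = M) {ζ : K.carrier}
    (hζ : ∀ s ∈ S, π s ζ = 0) : ζ = 0 := by
  let N₀ : NonUnitalStarSubalgebra ℂ (B H) := NonUnitalStarAlgebra.adjoin ℂ S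
  let N : NonUnitalStarSubalgebra ℂ (B H) := N₀.topologicalClosure
  have hN0 : ∀ s ∈ N₀, s ∈ M ∧ π s ζ = 0 ∧ π (star s) ζ = 0 := by
    intro s hs
    refine NonUnitalStarAlgebra.adjoin_induction
      (R := ℂ) (s := S) (p := fun s _ => s ∈ M ∧ π s ζ = 0 ∧ π (star s) ζ = 0) ?_ ?_ ?_ ?_ ?_ ?_ hs
    · exact fun s hs => ⟨hSM hs, hζ s hs, hζ _ (hstar s hs)⟩
    · rintro x y _ _ ⟨hx, hx1, hx2⟩ ⟨hy, hy1, hy2⟩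
      refine ⟨(vnaSub hM).add_mem hx hy, ?_, ?_⟩
      · rw [hπ.map_add x hx y hy]; simp [hx1, hy1]
      · rw [star_add, hπ.map_add _ (hM.1 x hx) _ (hM.1 y hy)]; simp [hx2, hy2]
    · have hz : π 0 ζ = 0 := by
        have := hπ.map_smul 0 1 h1
        rw [zero_smul, zero_smul] at this
        rw [this]; rfl
      exact ⟨(vnaSub hM).zero_mem, hz, by simpa using hz⟩
    · rintro x y _ _ ⟨hx, hx1, hx2⟩ ⟨hy, hy1, hy2⟩
      refine ⟨(vnaSub hM).mul_mem hx hy, ?_, ?_⟩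
      · rw [hπ.map_mul x hx y hy]; simp [hy1]
      · rw [star_mul, hπ.map_mul _ (hM.1 y hy) _ (hM.1 x hx)]; simp [hx2]
    · rintro c x _ ⟨hx, hx1, hx2⟩
      refine ⟨vna_smul hM c hx, ?_, ?_⟩
      · rw [hπ.map_smul c x hx]; simp [hx1]
      · rw [star_smul, hπ.map_smul _ _ (hM.1 x hx)]; simp [hx2]
    · rintro x _ ⟨hx, hx1, hx2⟩
      exact ⟨hM.1 x hx, hx2, by simpa using hx1⟩
  have hNM : ∀ s ∈ N, s ∈ M := fun s hs =>
    closure_minimal (fun t ht => (hN0 t ht).1) (vna_norm_closed hM) hs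
  have hN : ∀ s ∈ N, π s ζ = 0 := by
    intro s hs
    have hs' : s ∈ closure (N₀ : Set (B H)) := hs
    refine norm_le_zero_iff.1 (le_of_forall_pos_le_add fun ε hε => ?_)
    obtain ⟨t, ht, hst⟩ := Metric.mem_closure_iff.1 hs' (ε / (‖ζ‖ + 1)) (by positivity)
    obtain ⟨htM, ht0, -⟩ := hN0 t ht
    have hsM := hNM s hs
    have e : s = (s - t) + t := by abel
    have hst' : s - t ∈ M := (vnaSub hM).sub_mem hsM htM
    have e1 : π s ζ = π (s - t) ζ := by
      conv_lhs => rw [e, hπ.map_add _ hst' _ htM]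
      simp [ht0]
    rw [e1, zero_add]
    rw [dist_eq_norm] at hst
    calc ‖π (s - t) ζ‖ ≤ ‖π (s - t)‖ * ‖ζ‖ := (π (s - t)).le_opNorm ζ
      _ ≤ (ε / (‖ζ‖ + 1)) * (‖ζ‖ + 1) := by
        gcongr
        · exact (hom_norm_le hM hπ hst').trans hst.le
        · linarith
      _ = ε := by field_simp
  have : IsClosed (N : Set (B H)) := N₀.isClosed_topologicalClosure
  let _ : PartialOrder N := CStarAlgebra.spectralOrder N
  have : StarOrderedRing N := CStarAlgebra.spectralOrderedRing N
  have hl := CStarAlgebra.increasingApproximateUnit N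
  set l := CStarAlgebra.approximateUnit N
  have hSN : ∀ s ∈ S, s ∈ N := fun s hs =>
    subset_closure (NonUnitalStarAlgebra.subset_adjoin ℂ S hs)
  -- the vectors `s η` are total
  have htot : (Submodule.span ℂ {v : H.carrier | ∃ s ∈ S, ∃ η, v = s η}).topologicalClosure = ⊤ := by
    refine total_of_perp fun v hv => ?_
    have := spanClosure_zero (S := S) v v (fun z hz => by
      exact inner_eq_zero_symm.1 (hv _ ⟨z, hz, v, rfl⟩)) (z := 1) (by rw [hd]; exact h1)
    simpa using this
  have hball : ∀ᶠ e : N in l, ‖(e : B H)‖ ≤ 1 := hl.eventually_norm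
  have hstrong : ∀ η : H.carrier, Tendsto (fun e : N => (e : B H) η) l (𝓝 ((1 : B H) η)) := by
    refine tendsto_total (T := fun e : N => (e : B H)) (T₀ := (1 : B H)) htot hball ?_
    rintro _ ⟨s, hs, η, rfl⟩
    have h2 := hl.tendsto_mul_right ⟨s, hSN s hs⟩
    have h3 : Tendsto (fun e : N => ((e : B H) * s) η) l (𝓝 (s η)) := by
      have hc : Continuous (fun e : N => (e : B H) η) := by fun_prop
      exact (hc.tendsto _).comp h2
    exact h3
  have hw : Tendsto (fun e : N => (e : B H)) l
      (@nhdsWithin _ (wotTop H) 1 (M ∩ Metric.closedBall 0 1)) := by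
    refine tendsto_inf.2 ⟨wot_tendsto.2 fun ξ η => ?_, ?_⟩
    · exact ((innerSL ℂ ξ).continuous.tendsto _).comp (hstrong η)
    · refine tendsto_principal.2 ?_
      filter_upwards [hball] with e he
      exact ⟨hNM e e.2, by simpa using he⟩
  have hmem : (1 : B H) ∈ M ∩ Metric.closedBall 0 1 :=
    ⟨h1, mem_closedBall_zero_iff.2 ContinuousLinearMap.norm_id_le⟩
  have h4 : Tendsto (fun a => ⟪ζ, π a ζ⟫)
      (@nhdsWithin _ (wotTop H) 1 (M ∩ Metric.closedBall 0 1)) (𝓝 ⟪ζ, π 1 ζ⟫) :=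
    normalOn_apply hn 1 ζ ζ 1 hmem
  have h5 := h4.comp hw
  have h6 : Tendsto (fun _ : N => (0 : ℂ)) l (𝓝 ⟪ζ, π 1 ζ⟫) := by
    refine h5.congr fun e => ?_
    simp [hN e e.2]
  have h7 := tendsto_nhds_unique h6 tendsto_const_nhds
  rw [hπ.map_unit] at h7
  simpa using h7


theorem star_inner_right {H : HilbS} (T : B H) (v w : H.carrier) :
    ⟪v, (star T) w⟫ = ⟪T v, w⟫ := by
  rw [ContinuousLinearMap.star_eq_adjoint, ContinuousLinearMap.adjoint_inner_right]

theorem vna_commutant {H : HilbS} {S : Set (B H)} (hS : ∀ s ∈ S, star s ∈ S) :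
    IsVNA (commutant S) := by
  refine ⟨fun T hT s hs => ?_, Set.centralizer_centralizer_centralizer S⟩
  have := congrArg star (hT (star s) (hS s hs))
  simpa using this.symm

/-- A vector space property of operators in a von Neumann algebra may be checked on unitaries. -/
theorem unitary_induction {H : HilbS} {M : Set (B H)} (hM : IsVNA M) {P : B H → Prop}
    (hu : ∀ u ∈ M, star u * u = 1 → P u) (h0 : P 0) (hadd : ∀ x y, P x → P y → P (x + y))
    (hsmul : ∀ (c : ℂ) x, P x → P (c • x)) {T : B H} (hT : T ∈ M) : P T := by
  have h : (⟨T, hT⟩ : vnaSub hM) ∈ Submodule.span ℂ (unitary (vnaSub hM) : Set (vnaSub hM)) := by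
    rw [CStarAlgebra.span_unitary]; trivial
  refine Submodule.span_induction (p := fun (x : vnaSub hM) _ => P x.1) ?_ h0 ?_ ?_ h
  · intro u h
    exact hu u.1 u.2 (congrArg Subtype.val (Unitary.mem_iff.1 h).1)
  · exact fun x y _ _ hx hy => hadd _ _ hx hy
  · exact fun c x _ hx => hsmul c _ hx

/-- Proposition 2.9: if `X` is an equivalence `A`-`B`-bimodule and
`(K, π_K, ρ_K)` is a Morita `B`-`C`-correspondence, then the `A`-`C`-correspondence
`X ⊗_B K` (realized on any Hilbert space `L` via a map `j` with the defining inner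
product identity, balancedness and density, and with the actions `π_⊠(a) (x ⊗ ξ) =
(a x) ⊗ ξ`, `ρ_⊠(c)(x ⊗ ξ) = x ⊗ ρ_K(c) ξ`) is a Morita `A`-`C`-correspondence. -/
theorem statement2 {Ha Hb Hc : HilbS} (As : Set (B Ha)) (Bs : Set (B Hb))
    (Cs : Set (B Hc)) (hA : IsVNA As) (hB : IsVNA Bs) (hC : IsVNA Cs)
    (h1A : (1 : B Ha) ∈ As) (h1B : (1 : B Hb) ∈ Bs) (h1C : (1 : B Hc) ∈ Cs)
    (E : EquivBimodule As Bs)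
    (K : HilbS) (πK : B Hb → B K) (ρK : B Hc → B K) (hK : MoritaCorr Bs Cs K πK ρK)
    (L : HilbS) (j : E.X → K.carrier → L.carrier)
    (j_addl : ∀ x y ξ, j (x + y) ξ = j x ξ + j y ξ)
    (j_addr : ∀ x ξ η, j x (ξ + η) = j x ξ + j x η)
    (j_smull : ∀ (c : ℂ) (x ξ), j (c • x) ξ = c • j x ξ)
    (j_smulr : ∀ (c : ℂ) (x ξ), j x (c • ξ) = c • j x ξ)
    (j_balanced : ∀ x, ∀ b ∈ Bs, ∀ ξ, j (E.actR x b) ξ = j x ((πK b) ξ))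
    (j_inner : ∀ x y ξ η, ⟪j x ξ, j y η⟫ = ⟪ξ, (πK (E.ipB x y)) η⟫)
    (j_dense : (Submodule.span ℂ {v : L.carrier | ∃ x ξ, v = j x ξ}).topologicalClosure = ⊤)
    (πT : B Ha → B L) (ρT : B Hc → B L)
    (hπT : ∀ a ∈ As, ∀ x ξ, (πT a) (j x ξ) = j (E.actL a x) ξ)
    (hρT : ∀ c ∈ Cs, ∀ x ξ, (ρT c) (j x ξ) = j x ((ρK c) ξ)) :
    MoritaCorr As Cs L πT ρT := by
  have mulA : ∀ a ∈ As, ∀ b ∈ As, a * b ∈ As := fun a ha b hb => (vnaSub hA).mul_mem ha hb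
  have addA : ∀ a ∈ As, ∀ b ∈ As, a + b ∈ As := fun a ha b hb => (vnaSub hA).add_mem ha hb
  have mulC : ∀ a ∈ Cs, ∀ b ∈ Cs, a * b ∈ Cs := fun a ha b hb => (vnaSub hC).mul_mem ha hb
  have addC : ∀ a ∈ Cs, ∀ b ∈ Cs, a + b ∈ Cs := fun a ha b hb => (vnaSub hC).add_mem ha hb
  have ext_j : ∀ T T' : B L, (∀ x ξ, T (j x ξ) = T' (j x ξ)) → T = T' := by
    intro T T' h
    refine ext_total j_dense ?_
    rintro _ ⟨x, ξ, rfl⟩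
    exact h x ξ
  have ext_jj : ∀ T T' : B L,
      (∀ x ξ y η, ⟪j x ξ, T (j y η)⟫ = ⟪j x ξ, T' (j y η)⟫) → T = T' := by
    intro T T' h
    refine ext_j T T' fun y η => sub_eq_zero.1 (eq_zero_total j_dense ?_)
    rintro _ ⟨x, ξ, rfl⟩
    rw [inner_sub_right, h, sub_self]
  -- the commutation of `ρK` and `πK`
  have hcomm : ∀ b ∈ Bs, ∀ c ∈ Cs, ∀ ξ, πK b (ρK c ξ) = ρK c (πK b ξ) := by
    intro b hb c hc ξ
    have : ρK c ∈ commutant (πK '' Bs) := by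
      rw [hK.comm_eq]; exact mem_image_of_mem _ hc
    have := this (πK b) (mem_image_of_mem _ hb)
    exact DFunLike.congr_fun this ξ
  -- `πT` is a star homomorphism
  have π_hom : IsStarHomOn As 1 1 πT := by
    refine ⟨?_, ?_, ?_, ?_, ?_⟩
    · intro a ha b hb
      refine ext_j _ _ fun x ξ => ?_
      rw [add_apply, hπT _ (addA a ha b hb), hπT a ha, hπT b hb,
        E.actL_add' a ha b hb, j_addl]
    · intro c a ha
      refine ext_j _ _ fun x ξ => ?_
      rw [smul_apply, hπT _ (vna_smul hA c ha), hπT a ha,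
        E.actL_smul c a ha, j_smull]
    · intro a ha b hb
      refine ext_j _ _ fun x ξ => ?_
      rw [mul_apply_eq_comp, hπT _ (mulA a ha b hb), hπT b hb, hπT a ha,
        E.actL_mul a ha b hb]
    · intro a ha
      refine ext_jj _ _ fun x ξ y η => ?_
      rw [star_inner_right, hπT a ha, hπT _ (hA.1 a ha), j_inner, j_inner, E.ipB_actL a ha]
    · refine ext_j _ _ fun x ξ => ?_
      rw [hπT _ h1A, E.actL_one]; rfl
  have ρ_hom : IsStarAntiHomOn Cs 1 1 ρT := by
    refine ⟨?_, ?_, ?_, ?_, ?_⟩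
    · intro a ha b hb
      refine ext_j _ _ fun x ξ => ?_
      rw [add_apply, hρT _ (addC a ha b hb), hρT a ha, hρT b hb,
        hK.ρ_hom.map_add a ha b hb, add_apply, j_addr]
    · intro c a ha
      refine ext_j _ _ fun x ξ => ?_
      rw [smul_apply, hρT _ (vna_smul hC c ha), hρT a ha,
        hK.ρ_hom.map_smul c a ha, smul_apply, j_smulr]
    · intro a ha b hb
      refine ext_j _ _ fun x ξ => ?_
      rw [mul_apply_eq_comp, hρT _ (mulC a ha b hb), hρT a ha, hρT b hb,
        hK.ρ_hom.map_mul a ha b hb, mul_apply_eq_comp]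
    · intro c hc
      refine ext_jj _ _ fun x ξ y η => ?_
      rw [star_inner_right, hρT c hc, hρT _ (hC.1 c hc), j_inner, j_inner, hK.ρ_hom.map_star c hc,
        ← star_inner_right, ← hK.ρ_hom.map_star c hc, hcomm _ (E.ipB_mem x y) _ (hC.1 c hc)]
    · refine ext_j _ _ fun x ξ => ?_
      rw [hρT _ h1C, hK.ρ_hom.map_unit]; rfl
  -- the creation operators
  have hV : ∃ V : E.X → K.carrier →L[ℂ] L.carrier, ∀ x ξ, V x ξ = j x ξ := by
    refine ⟨fun x => LinearMap.mkContinuousOfExistsBound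
      { toFun := j x, map_add' := j_addr x, map_smul' := fun c ξ => j_smulr c x ξ } ?_,
      fun x ξ => rfl⟩
    refine ⟨√‖πK (E.ipB x x)‖, fun ξ => ?_⟩
    change ‖j x ξ‖ ≤ _
    refine le_of_sq_le_sq ?_ (by positivity)
    rw [mul_pow, Real.sq_sqrt (norm_nonneg _)]
    have h1 : ‖j x ξ‖ ^ 2 = ‖⟪j x ξ, j x ξ⟫‖ := by simp
    rw [h1, j_inner]
    calc _ ≤ ‖ξ‖ * ‖πK (E.ipB x x) ξ‖ := norm_inner_le_norm _ _
      _ ≤ ‖ξ‖ * (‖πK (E.ipB x x)‖ * ‖ξ‖) := by gcongr; exact ContinuousLinearMap.le_opNorm _ _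
      _ = _ := by ring
  obtain ⟨V, hV⟩ := hV
  have hVV : ∀ x y ξ, (V x).adjoint (V y ξ) = πK (E.ipB x y) ξ := by
    intro x y ξ
    refine ext_inner_left ℂ fun η => ?_
    rw [ContinuousLinearMap.adjoint_inner_right, hV, hV, j_inner]
  have hVW : ∀ x y ζ, V x ((V y).adjoint ζ) = πT (E.ipA x y) ζ := by
    intro x y ζ
    have : (V x).comp (V y).adjoint = πT (E.ipA x y) := by
      refine ext_j _ _ fun z ξ => ?_
      rw [ContinuousLinearMap.comp_apply, ← hV z, hVV, hV, hV, hπT _ (E.ipA_mem x y), E.compat,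
        j_balanced _ _ (E.ipB_mem y z)]
    exact DFunLike.congr_fun this ζ
  -- nondegeneracy
  have nd : ∀ ζ : K.carrier, (∀ y, V y ζ = 0) → ζ = 0 := by
    intro ζ h
    refine nondeg hB h1B hK.π_hom hK.π_normal (S := {z : B Hb | ∃ x y, z = E.ipB x y})
      ?_ ?_ E.denseB ?_
    · rintro _ ⟨x, y, rfl⟩; exact E.ipB_mem x y
    · rintro _ ⟨x, y, rfl⟩; exact ⟨y, x, E.ipB_star x y⟩
    · rintro _ ⟨x, y, rfl⟩
      rw [← hVV, h, map_zero]
  have htot : (Submodule.span ℂ (range fun p : E.X × L.carrier =>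
      (V p.1).adjoint p.2)).topologicalClosure = ⊤ := by
    refine total_of_perp fun v hv => nd v fun y => ?_
    refine ext_inner_left ℂ fun w => ?_
    rw [inner_zero_right, ← ContinuousLinearMap.adjoint_inner_left]
    exact hv _ ⟨(y, w), rfl⟩
  refine ⟨π_hom, ?_, ?_, ρ_hom, ?_, ?_, ?_⟩
  · -- normality of `πT`
    refine normalOn_of_total j_dense (fun a ha => hom_norm_le hA π_hom ha) ?_
    rintro r _ ⟨x, ξ, rfl⟩ _ ⟨y, η, rfl⟩
    have hbd : ∀ a ∈ As, ‖E.ipB x (E.actL a y)‖ ≤ ‖V x‖ * ‖a‖ * ‖V y‖ := by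
      intro a ha
      rw [← hom_norm_eq hB hK.π_hom hK.π_inj (E.ipB_mem _ _)]
      refine ContinuousLinearMap.opNorm_le_bound _ (by positivity) fun ζ => ?_
      rw [← hVV, hV, ← hπT a ha, ← hV]
      calc ‖(V x).adjoint (πT a (V y ζ))‖ ≤ ‖(V x).adjoint‖ * (‖πT a‖ * (‖V y‖ * ‖ζ‖)) := by
            refine (ContinuousLinearMap.le_opNorm _ _).trans ?_
            gcongr
            refine (ContinuousLinearMap.le_opNorm _ _).trans ?_
            gcongr
            exact ContinuousLinearMap.le_opNorm _ _
        _ ≤ ‖V x‖ * (‖a‖ * (‖V y‖ * ‖ζ‖)) := by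
            rw [LinearIsometryEquiv.norm_map]
            gcongr
            exact hom_norm_le hA π_hom ha
        _ = _ := by ring
    have hc := @ContinuousOn.comp _ _ _ (wotTop Ha) (wotTop Hb) _
      _ _ _ _ (normalOn_apply hK.π_normal (‖V x‖ * r * ‖V y‖) ξ η)
      (E.normalL x y r) (fun a ha => ⟨E.ipB_mem _ _, mem_closedBall_zero_iff.2 <| by
        refine (hbd a ha.1).trans ?_
        gcongr
        exact mem_closedBall_zero_iff.1 ha.2⟩)
    refine @ContinuousOn.congr _ _ (wotTop Ha) _ _ _ _ hc ?_
    intro a ha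
    change ⟪j x ξ, πT a (j y η)⟫ = _
    rw [hπT a ha.1, j_inner]; rfl
  · -- faithfulness of `πT`
    have key : ∀ a ∈ As, πT a = 0 → a = 0 := by
      intro a ha h0
      have h1 : ∀ x, E.actL a x = 0 := by
        intro x
        apply E.ipB_defin
        have h2 : πK (E.ipB (E.actL a x) (E.actL a x)) = 0 := by
          refine ContinuousLinearMap.ext fun ξ => ext_inner_left ℂ fun η => ?_
          rw [← j_inner, ← hπT a ha x ξ, h0]
          simp
        rw [← norm_eq_zero, ← hom_norm_eq hB hK.π_hom hK.π_inj (E.ipB_mem _ _), h2, norm_zero]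
      have h3 : ∀ x y, a * E.ipA x y = 0 := by
        intro x y
        rw [← E.ipA_actL a ha, h1]
        have := E.ipA_smul_left 0 0 y
        simpa using this
      refine ContinuousLinearMap.ext fun ξ => ext_inner_left ℂ fun η => ?_
      have := spanClosure_zero (S := {z : B Ha | ∃ x y, z = E.ipA x y}) (star a η) ξ ?_
        (z := 1) (by rw [E.denseA]; exact h1A)
      · rw [ContinuousLinearMap.star_eq_adjoint, ContinuousLinearMap.adjoint_inner_left] at this
        simpa using this
      · rintro _ ⟨x, y, rfl⟩
        rw [ContinuousLinearMap.star_eq_adjoint, ContinuousLinearMap.adjoint_inner_left,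
          ← mul_apply_eq_comp, h3]
        simp
    intro a ha b hb hab
    have hs : a - b ∈ As := (vnaSub hA).sub_mem ha hb
    have : πT (a - b) = 0 := by
      have h := π_hom.map_add (a - b) hs b hb
      rw [sub_add_cancel, hab] at h
      simpa using h
    exact sub_eq_zero.1 (key _ hs this)
  · -- normality of `ρT`
    refine normalOn_of_total j_dense (fun a ha => antiHom_norm_le hC ρ_hom ha) ?_
    rintro r _ ⟨x, ξ, rfl⟩ _ ⟨y, η, rfl⟩
    refine @ContinuousOn.congr _ _ (wotTop Hc) _ _ _ _
      (normalOn_apply hK.ρ_normal r ((πK (E.ipB x y)).adjoint ξ) η) ?_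
    intro c hc
    change ⟪j x ξ, ρT c (j y η)⟫ = ⟪(πK (E.ipB x y)).adjoint ξ, ρK c η⟫
    rw [hρT c hc.1, j_inner, ContinuousLinearMap.adjoint_inner_left]
  · -- faithfulness of `ρT`
    intro a ha b hb hab
    refine hK.ρ_inj ha hb (ContinuousLinearMap.ext fun ξ => sub_eq_zero.1 (nd _ fun y => ?_))
    rw [map_sub, hV, hV, ← hρT a ha, ← hρT b hb, hab, sub_self]
  · -- the commutant
    apply Subset.antisymm
    · have key : ∀ T ∈ commutant (πT '' As), ∃ S : B K, ∀ x ζ,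
          S ((V x).adjoint ζ) = (V x).adjoint (T ζ) := by
        intro T hT
        refine unitary_induction (P := fun T => ∃ S : B K, ∀ x ζ,
          S ((V x).adjoint ζ) = (V x).adjoint (T ζ)) (vna_commutant ?_) ?_ ?_ ?_ ?_ hT
        · rintro _ ⟨a, ha, rfl⟩
          exact ⟨star a, hA.1 a ha, π_hom.map_star a ha⟩
        · intro u hu huu
          obtain ⟨S, hS⟩ := exists_extend (fun p : E.X × L.carrier => (V p.1).adjoint p.2)
            (fun p : E.X × L.carrier => (V p.1).adjoint (u p.2)) htot (by
              rintro ⟨x, ζ⟩ ⟨y, ζ'⟩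
              have h1 : πT (E.ipA x y) (u ζ') = u (πT (E.ipA x y) ζ') :=
                DFunLike.congr_fun (hu _ (mem_image_of_mem πT (E.ipA_mem x y))) ζ'
              have h2 : star u (u (πT (E.ipA x y) ζ')) = πT (E.ipA x y) ζ' :=
                DFunLike.congr_fun huu _
              rw [ContinuousLinearMap.adjoint_inner_left, ContinuousLinearMap.adjoint_inner_left,
                hVW, hVW, h1, ← star_inner_right, h2])
          exact ⟨S, fun x ζ => hS (x, ζ)⟩
        · exact ⟨0, fun x ζ => by simp⟩
        · rintro x y ⟨S, hS⟩ ⟨S', hS'⟩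
          exact ⟨S + S', fun x ζ => by simp [hS, hS']⟩
        · rintro c x ⟨S, hS⟩
          exact ⟨c • S, fun x ζ => by simp [hS]⟩
      intro T hT
      obtain ⟨S, hS⟩ := key T hT
      have hSc : S ∈ commutant (πK '' Bs) := by
        rintro _ ⟨b, hb, rfl⟩
        have hbV : ∀ x ζ, πK b ((V x).adjoint ζ) = (V (E.actR x (star b))).adjoint ζ := by
          intro x ζ
          refine ext_inner_left ℂ fun η => ?_
          rw [ContinuousLinearMap.adjoint_inner_right, hV, j_balanced _ _ (hB.1 b hb),
            hK.π_hom.map_star b hb, ← hV, ← ContinuousLinearMap.adjoint_inner_right,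
            ContinuousLinearMap.star_eq_adjoint, ContinuousLinearMap.adjoint_inner_left]
        refine ext_total htot ?_
        rintro _ ⟨⟨x, ζ⟩, rfl⟩
        change πK b (S ((V x).adjoint ζ)) = S (πK b ((V x).adjoint ζ))
        rw [hS, hbV, hbV, hS]
      rw [hK.comm_eq] at hSc
      obtain ⟨c, hc, rfl⟩ := hSc
      refine ⟨c, hc, ext_j _ _ fun x ξ => ?_⟩
      have hTV : T.comp (V x) = (V x).comp (ρK c) := by
        refine ext_total htot ?_
        rintro _ ⟨⟨y, ζ⟩, rfl⟩
        change T (V x ((V y).adjoint ζ)) = V x (ρK c ((V y).adjoint ζ))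
        rw [hS, hVW, hVW]
        have := hT _ (mem_image_of_mem πT (E.ipA_mem x y))
        exact (DFunLike.congr_fun this ζ).symm
      have := DFunLike.congr_fun hTV ξ
      rw [hρT c hc, ← hV, ← hV]
      exact this.symm
    · rintro _ ⟨c, hc, rfl⟩ _ ⟨a, ha, rfl⟩
      refine ext_j _ _ fun x ξ => ?_
      rw [mul_apply_eq_comp, mul_apply_eq_comp, hρT c hc, hπT a ha,
        hπT a ha, hρT c hc]

end Paper
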